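/- (Theorem 3.1, local ergodic theorem in equilibrium form) For every jump rate c, every Γ-invariant local function bundle f: V×Z → ℝ, and every constant C > 0, it holds that lim_{i→∞} limsup_{ε→0} limsup_{m→∞} sup_{μ ∈ P_{m,C}} E_μ | f̄_{o,i} − ⟨f_o⟩( η̄_{o, b(ε√t_m)} ) | = 0. -/

import Mathlib

open Filter Pointwise

namespace Tower

variable {Γ : Type} [Group Γ] [DecidableEq Γ]

/-- The ball of radius `n` about the identity in the Cayley graph of `(Γ, S)`, as a `Finset`:
products of at most `n` elements of `S`. -/
def ballF (S : Finset Γ) : ℕ → Finset Γ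
  | 0 => {1}
  | n + 1 => ballF S n ∪ ballF S n * S

lemma one_mem_ballF (S : Finset Γ) (n : ℕ) : (1 : Γ) ∈ ballF S n := by
  induction n with
  | zero => simp [ballF]
  | succ n ih => exact Finset.mem_union_left _ ih

/-- The word norm of `x` with respect to `S`. -/
noncomputable def wordNorm (S : Finset Γ) (x : Γ) : ℕ := sInf {n | x ∈ ballF S n}

/-- `(F i)` is a Følner sequence for `(Γ, S)`. -/
def IsFolner (S : Finset Γ) (F : ℕ → Finset Γ) : Prop :=
  (∀ i, (F i).Nonempty) ∧
    Tendsto (fun i => (((F i * S) \ F i).card : ℝ) / (F i).card) atTop (nhds 0)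

/-- `b(K)`: the largest `i` such that `F i` is contained in the ball of radius `K` about `o`. -/
noncomputable def bFol (S : Finset Γ) (F : ℕ → Finset Γ) (K : ℝ) : ℕ :=
  sSup {i | ∀ x ∈ F i, (wordNorm S x : ℝ) ≤ K}

/-- Exchange the values of a configuration at two coordinates. -/
def exch {α : Type} [DecidableEq α] (x y : α) (η : α → Bool) : α → Bool :=
  fun z => if z = x then η y else if z = y then η x else η z

/-- Exchange of values at two coordinates, on configurations restricted to a `Finset`. -/
def exchOn {α : Type} [DecidableEq α] (A : Finset α) (x y : α)
    (ζ : {a // a ∈ A} → Bool) : {a // a ∈ A} → Bool :=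
  fun z => if (z : α) = x then (if h : y ∈ A then ζ ⟨y, h⟩ else ζ z)
    else if (z : α) = y then (if h : x ∈ A then ζ ⟨x, h⟩ else ζ z) else ζ z

/-- The type of generators. -/
abbrev Gen (S : Finset Γ) : Type _ := {s : Γ // s ∈ S}

/-- A `Γ`-invariant local function bundle for vertices `f : V × Z → ℝ` on the Cayley graph
`X = (V, E)` of `(Γ, S)`, `V = Γ`, `Z = {0,1}^V`. -/
structure LocalBundleV (S : Finset Γ) : Type _ where
  f : Γ → (Γ → Bool) → ℝ
  r : ℕ
  localized : ∀ (x : Γ) (η η' : Γ → Bool),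
    (∀ z ∈ (ballF S r).image (x * ·), η z = η' z) → f x η = f x η'
  invariant : ∀ (σ x : Γ) (η : Γ → Bool), f (σ * x) (fun z => η (σ⁻¹ * z)) = f x η

/-- A jump rate: a symmetric, non-degenerate `Γ`-invariant local function bundle for edges,
an edge being encoded as a pair `(x, s) : Γ × Gen S` with origin `x` and terminus `x * s`. -/
structure JumpRate (S : Finset Γ) : Type _ where
  c : Γ → Gen S → (Γ → Bool) → ℝ
  c₀ : ℝ
  c₀_pos : 0 < c₀
  nondeg : ∀ x s η, c₀ ≤ c x s η
  r : ℕ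
  localized : ∀ (x : Γ) (s : Gen S) (η η' : Γ → Bool),
    (∀ z ∈ (ballF S r).image (x * ·) ∪ (ballF S r).image (x * (s : Γ) * ·), η z = η' z) →
      c x s η = c x s η'
  invariant : ∀ (σ x : Γ) (s : Gen S) (η : Γ → Bool),
    c (σ * x) s (fun z => η (σ⁻¹ * z)) = c x s η
  symm_rev : ∀ (x : Γ) (s : Gen S) (h : (s : Γ)⁻¹ ∈ S) (η : Γ → Bool),
    c (x * (s : Γ)) ⟨(s : Γ)⁻¹, h⟩ η = c x s η
  symm_exch : ∀ (x : Γ) (s : Gen S) (η : Γ → Bool),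
    c x s (exch x (x * (s : Γ)) η) = c x s η

/-- `ρ`-Bernoulli weight on `{0,1}`. -/
def bw (ρ : ℝ) (b : Bool) : ℝ := if b then ρ else 1 - ρ

/-- Expectation with respect to the `ρ`-Bernoulli product measure `ν_ρ` of a cylinder function
depending only on the coordinates in the finite set `A`. -/
noncomputable def expCyl (ρ : ℝ) (A : Finset Γ) (g : (Γ → Bool) → ℝ) : ℝ :=
  ∑ ζ : ({a // a ∈ A} → Bool),
    (∏ a : {a // a ∈ A}, bw ρ (ζ a)) *
      g (fun z => if h : z ∈ A then ζ ⟨z, h⟩ else false)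

/-- The global average `⟨f_o⟩(ρ) = E_{ν_ρ}[f_o]`. -/
noncomputable def globalAvg {S : Finset Γ} (f : LocalBundleV S) (ρ : ℝ) : ℝ :=
  expCyl ρ (ballF S f.r) (f.f 1)

section Quot

variable (N : Subgroup Γ)

/-- The configuration space `Z_m = {0,1}^{V_m}` over the quotient graph `X_m = Γ_m \ X`. -/
abbrev Conf (N : Subgroup Γ) : Type _ := (Γ ⧸ N) → Bool

/-- The `Γ_m`-periodic extension of a configuration on `X_m` to `X`. -/
def liftZ (η : Conf N) : Γ → Bool := fun x => η (QuotientGroup.mk x)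

/-- The function on `V_m × Z_m` induced by a local function bundle. -/
noncomputable def fQ {S : Finset Γ} (f : LocalBundleV S) (v : Γ ⧸ N) (η : Conf N) : ℝ :=
  f.f (Quotient.out v) (liftZ N η)

/-- The jump rate induced on the quotient graph, on the edge `(v, v * s)`. -/
noncomputable def cQ {S : Finset Γ} (c : JumpRate S) (v : Γ ⧸ N) (s : Gen S) (η : Conf N) : ℝ :=
  c.c (Quotient.out v) s (liftZ N η)

variable [N.Normal]

/-- `η^e` on the quotient, for the edge `e = (v, v * s)`. -/
def exchQ [DecidableEq (Γ ⧸ N)] (v : Γ ⧸ N) (s : Γ) (η : Conf N) : Conf N :=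
  exch v (v * QuotientGroup.mk s) η

/-- The graph distance on the quotient graph `X_m`. -/
noncomputable def distQ (S : Finset Γ) (v w : Γ ⧸ N) : ℕ :=
  sInf {n | ∃ x ∈ ballF S n, v * QuotientGroup.mk x = w}

/-- The diameter of the quotient graph `X_m`. -/
noncomputable def diamQ (S : Finset Γ) : ℕ :=
  sSup {k | ∃ v w : Γ ⧸ N, distQ N S v w = k}

variable [Fintype (Γ ⧸ N)] [DecidableEq (Γ ⧸ N)]

/-- `μ` is a probability measure on the finite configuration space `Z_m`. -/
def IsProb (μ : Conf N → ℝ) : Prop := (∀ η, 0 ≤ μ η) ∧ ∑ η, μ η = 1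

/-- The action of `Γ/Γ_m` on `Z_m`. -/
def actQ (σ : Γ ⧸ N) (η : Conf N) : Conf N := fun z => η (σ⁻¹ * z)

/-- `μ` is `Γ/Γ_m`-invariant. -/
def IsInvariant (μ : Conf N → ℝ) : Prop := ∀ σ η, μ (actQ N σ η) = μ η

/-- The uniform ((1/2)-Bernoulli) measure `ν_m` on `Z_m`. -/
noncomputable def nuU : Conf N → ℝ := fun _ => (Fintype.card (Conf N) : ℝ)⁻¹

/-- The density `φ = dμ/dν_m`. -/
noncomputable def dens (μ : Conf N → ℝ) : Conf N → ℝ :=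
  fun η => (Fintype.card (Conf N) : ℝ) * μ η

/-- `√φ` where `φ = dμ/dν_m`. -/
noncomputable def sqrtDens (μ : Conf N → ℝ) : Conf N → ℝ :=
  fun η => Real.sqrt (dens N μ η)

/-- Expectation with respect to a probability measure on `Z_m`. -/
noncomputable def Emeas (μ : Conf N → ℝ) (g : Conf N → ℝ) : ℝ := ∑ η, μ η * g η

/-- The generator `L_m F (η) = Σ_{e ∈ E_m} c(e,η) (F(η^e) - F(η))`. -/
noncomputable def Lgen {S : Finset Γ} (c : JumpRate S) (F : Conf N → ℝ) (η : Conf N) : ℝ :=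
  ∑ e : (Γ ⧸ N) × Gen S, cQ N c e.1 e.2 η * (F (exchQ N e.1 (e.2 : Γ) η) - F η)

/-- The Dirichlet form `I_m(μ) = -∫ √φ L_m √φ dν_m`. -/
noncomputable def ImGen {S : Finset Γ} (c : JumpRate S) (μ : Conf N → ℝ) : ℝ :=
  - ∑ η, nuU N η * (sqrtDens N μ η * Lgen N c (sqrtDens N μ) η)

/-- The Dirichlet form in sum form:
`I_m(μ) = (1/2) Σ_{e ∈ E_m} ∫ c(e,η) (π_e √φ)² dν_m`. -/
noncomputable def ImSum {S : Finset Γ} (c : JumpRate S) (μ : Conf N → ℝ) : ℝ :=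
  (1 / 2) * ∑ e : (Γ ⧸ N) × Gen S, ∑ η, nuU N η *
    (cQ N c e.1 e.2 η * (sqrtDens N μ (exchQ N e.1 (e.2 : Γ) η) - sqrtDens N μ η) ^ 2)

/-- The local average `f̄_{v,i}` on the quotient, over the Følner set `Fi`. -/
noncomputable def fbarQ {S : Finset Γ} (f : LocalBundleV S) (Fi : Finset Γ) (v : Γ ⧸ N)
    (η : Conf N) : ℝ :=
  ((Fi.card : ℝ))⁻¹ * ∑ σ ∈ Fi, fQ N f (QuotientGroup.mk σ * v) η

/-- The local particle density `η̄_{v,i}` on the quotient, over the Følner set `Fi`. -/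
noncomputable def etabarQ (Fi : Finset Γ) (v : Γ ⧸ N) (η : Conf N) : ℝ :=
  ((Fi.card : ℝ))⁻¹ * ∑ σ ∈ Fi, (if η (QuotientGroup.mk σ * v) then (1 : ℝ) else 0)

/-- The image of `E⁰ = {e ∈ E : oe = o or te = o}` in `E_m`. -/
def E0Q (S : Finset Γ) : Finset ((Γ ⧸ N) × Gen S) :=
  Finset.univ.filter fun e => e.1 = 1 ∨ e.1 * QuotientGroup.mk (e.2 : Γ) = 1

/-- The marginal `μ|_Λ` on `Z_Λ = {0,1}^A` of a measure on `Z_m` (identified with its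
`Γ_m`-periodic extension). -/
noncomputable def marg (A : Finset Γ) (μ : Conf N → ℝ) (ζ : {a // a ∈ A} → Bool) : ℝ :=
  ∑ η : Conf N, if (∀ a : {a // a ∈ A}, liftZ N η (a : Γ) = ζ a) then μ η else 0

/-- The density `φ_Λ = d(μ|_Λ)/dν_Λ`. -/
noncomputable def margDens (A : Finset Γ) (μ : Conf N → ℝ) (ζ : {a // a ∈ A} → Bool) : ℝ :=
  (Fintype.card ({a // a ∈ A} → Bool) : ℝ) * marg N A μ ζ

/-- The restricted Dirichlet form
`I°_Λ(μ) = (1/2) Σ_{e ∈ E_Λ} ∫_{Z_Λ} (π_e √φ_Λ)² dν_Λ` for the subgraph `Λ = (A, Eset)`. -/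
noncomputable def IrestV {S : Finset Γ} (A : Finset Γ) (Eset : Finset (Γ × Gen S))
    (μ : Conf N → ℝ) : ℝ :=
  (1 / 2) * ∑ e ∈ Eset, ∑ ζ : ({a // a ∈ A} → Bool),
    (Fintype.card ({a // a ∈ A} → Bool) : ℝ)⁻¹ *
      (Real.sqrt (margDens N A μ (exchOn A e.1 (e.1 * (e.2 : Γ)) ζ)) -
        Real.sqrt (margDens N A μ ζ)) ^ 2

/-- The marginal on `Z_Λ × Z_Λ` of the pushforward `σ̂μ` of `μ` under `η ↦ (η, σ⁻¹η)`. -/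
noncomputable def margTwo (σ : Γ) (A : Finset Γ) (μ : Conf N → ℝ)
    (ζ ζ' : {a // a ∈ A} → Bool) : ℝ :=
  ∑ η : Conf N,
    if ((∀ a : {a // a ∈ A}, liftZ N η (a : Γ) = ζ a) ∧
        (∀ a : {a // a ∈ A}, liftZ N η (σ * (a : Γ)) = ζ' a)) then μ η else 0

/-- The density of `(σ̂μ)|_{Λ×Λ}` with respect to `ν_Λ ⊗ ν_Λ`. -/
noncomputable def margTwoDens (σ : Γ) (A : Finset Γ) (μ : Conf N → ℝ)
    (ζ ζ' : {a // a ∈ A} → Bool) : ℝ :=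
  ((Fintype.card ({a // a ∈ A} → Bool) : ℝ)) ^ 2 * margTwo N σ A μ ζ ζ'

/-- `I^{(o,o)}_{Λ×Λ}(σ̂μ) = (1/2) ∫ (π̃_{o,o} √(d(σ̂μ)|_{Λ×Λ}/d(ν_Λ⊗ν_Λ)))² d(ν_Λ⊗ν_Λ)`. -/
noncomputable def Ioo (σ : Γ) (A : Finset Γ) (h1 : (1 : Γ) ∈ A) (μ : Conf N → ℝ) : ℝ :=
  (1 / 2) * ∑ ζ : ({a // a ∈ A} → Bool), ∑ ζ' : ({a // a ∈ A} → Bool),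
    (((Fintype.card ({a // a ∈ A} → Bool) : ℝ)) ^ 2)⁻¹ *
      (Real.sqrt (margTwoDens N σ A μ (Function.update ζ ⟨1, h1⟩ (ζ' ⟨1, h1⟩))
          (Function.update ζ' ⟨1, h1⟩ (ζ ⟨1, h1⟩))) -
        Real.sqrt (margTwoDens N σ A μ ζ ζ')) ^ 2

/-- The two-block restricted Dirichlet form `I°_{Λ×Λ}(σ̂μ)`, i.e. the Dirichlet form of
`L°_Λ ⊗ 1 + 1 ⊗ L°_Λ` of the square root of the density of `(σ̂μ)|_{Λ×Λ}`. -/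
noncomputable def ItwoRest {S : Finset Γ} (σ : Γ) (A : Finset Γ) (Eset : Finset (Γ × Gen S))
    (μ : Conf N → ℝ) : ℝ :=
  (1 / 2) * ∑ e ∈ Eset, ∑ ζ : ({a // a ∈ A} → Bool), ∑ ζ' : ({a // a ∈ A} → Bool),
    (((Fintype.card ({a // a ∈ A} → Bool) : ℝ)) ^ 2)⁻¹ *
      ((Real.sqrt (margTwoDens N σ A μ (exchOn A e.1 (e.1 * (e.2 : Γ)) ζ) ζ') -
          Real.sqrt (margTwoDens N σ A μ ζ ζ')) ^ 2 +
        (Real.sqrt (margTwoDens N σ A μ ζ (exchOn A e.1 (e.1 * (e.2 : Γ)) ζ')) -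
          Real.sqrt (margTwoDens N σ A μ ζ ζ')) ^ 2)

end Quot

/-- The edge set `E_Λ` of the subgraph `Λ` spanned by the ball of radius `K`. -/
def ELam (S : Finset Γ) (K : ℕ) : Finset (Γ × Gen S) :=
  (ballF S K ×ˢ (Finset.univ : Finset (Gen S))).filter fun e => e.1 * (e.2 : Γ) ∈ ballF S K

/-!
A small Dirichlet form makes the weights `μ` almost invariant in `ℓ¹`, through the Hellinger
distance and Cauchy–Schwarz, under the exchange along any edge. Chaining such exchanges along paths
makes `μ` exchangeable on the ball of radius `ε √t` up to an error `O(ε)`. The `n`-point occupation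
probabilities of that ball then have nearly a common value, so that
`E X² ≈ E (X ρ ^ k) ≈ E ρ ^ (2 * k)` whenever `X` is a spatial average of `k`-point occupation
indicators and `ρ` is the density of the large block, provided that few pairs of sites coincide in
the quotient; a Følner sequence of an infinite group ensures this. Hence `E |X - ρ ^ k|` is small.
A local function is a multi-affine polynomial in the occupation variables, and its expectation at
density `ρ` arises by substituting `ρ ^ k` for every product of `k` of them.
-/

open scoped BigOperators Finset

section Mean

variable {Ω ι : Type*} [Fintype Ω] {μ : Ω → ℝ}

/-- The expectation of `g` under the weights `μ`; for configurations it is definitionally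
`Emeas`. Probability weights are the elements of `stdSimplex ℝ Ω`, which is definitionally
`IsProb`. -/
def mean (μ g : Ω → ℝ) : ℝ := μ ⬝ᵥ g

lemma mean_mono (hμ : μ ∈ stdSimplex ℝ Ω) {g h : Ω → ℝ} (hgh : ∀ ω, g ω ≤ h ω) :
    mean μ g ≤ mean μ h :=
  Finset.sum_le_sum fun ω _ => mul_le_mul_of_nonneg_left (hgh ω) (hμ.1 ω)

lemma mean_const (hμ : μ ∈ stdSimplex ℝ Ω) (a : ℝ) : mean μ (fun _ => a) = a := by
  simp only [mean, dotProduct, ← Finset.sum_mul, hμ.2, one_mul]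

lemma mean_mem_unitInterval (hμ : μ ∈ stdSimplex ℝ Ω) {g : Ω → ℝ}
    (hg : ∀ ω, g ω ∈ unitInterval) : mean μ g ∈ unitInterval :=
  ⟨mean_const hμ 0 ▸ mean_mono hμ fun ω => (hg ω).1,
    mean_const hμ 1 ▸ mean_mono hμ fun ω => (hg ω).2⟩

lemma mean_expect (μ : Ω → ℝ) (T : Finset ι) (g : ι → Ω → ℝ) :
    mean μ (fun ω => 𝔼 τ ∈ T, g τ ω) = 𝔼 τ ∈ T, mean μ (g τ) := by
  simp only [mean, dotProduct, Finset.mul_expect, Finset.expect_sum_comm]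

lemma mean_abs_le_sqrt_mean_sq (hμ : μ ∈ stdSimplex ℝ Ω) (g : Ω → ℝ) :
    mean μ (fun ω => |g ω|) ≤ √(mean μ fun ω => g ω ^ 2) := by
  have hsqrt (ω : Ω) : √(μ ω) * √(μ ω * g ω ^ 2) = μ ω * |g ω| := by
    rw [Real.sqrt_mul (hμ.1 ω), Real.sqrt_sq_eq_abs, ← mul_assoc, Real.mul_self_sqrt (hμ.1 ω)]
  have cauchySchwarz := Real.sum_sqrt_mul_sqrt_le Finset.univ hμ.1
    fun ω => mul_nonneg (hμ.1 ω) (sq_nonneg (g ω))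
  simpa only [mean, dotProduct, hsqrt, hμ.2, Real.sqrt_one, one_mul] using cauchySchwarz

lemma mean_abs_sub_le_sqrt (hμ : μ ∈ stdSimplex ℝ Ω) (X Y : Ω → ℝ) {M e₁ e₂ e₃ : ℝ}
    (hXX : |mean μ (fun ω => X ω ^ 2) - M| ≤ e₁)
    (hXY : |mean μ (fun ω => X ω * Y ω) - M| ≤ e₂)
    (hYY : |mean μ (fun ω => Y ω ^ 2) - M| ≤ e₃) :
    mean μ (fun ω => |X ω - Y ω|) ≤ √(e₁ + 2 * e₂ + e₃) := by
  have expand : mean μ (fun ω => (X ω - Y ω) ^ 2) =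
      mean μ (fun ω => X ω ^ 2) - 2 * mean μ (fun ω => X ω * Y ω) + mean μ fun ω => Y ω ^ 2 := by
    simp only [mean, dotProduct, Finset.mul_sum, ← Finset.sum_sub_distrib,
      ← Finset.sum_add_distrib]
    exact Finset.sum_congr rfl fun ω _ => by ring
  refine (mean_abs_le_sqrt_mean_sq hμ _).trans (Real.sqrt_le_sqrt ?_)
  linarith [(abs_le.1 hXX).2, (abs_le.1 hXY).1, (abs_le.1 hYY).2]

lemma mean_abs_sum_mul_sub_le (hμ : μ ∈ stdSimplex ℝ Ω) (s : Finset ι) (a : ι → ℝ)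
    (X Y : ι → Ω → ℝ) :
    mean μ (fun ω => |∑ u ∈ s, a u * X u ω - ∑ u ∈ s, a u * Y u ω|) ≤
      ∑ u ∈ s, |a u| * mean μ fun ω => |X u ω - Y u ω| :=
  calc mean μ (fun ω => |∑ u ∈ s, a u * X u ω - ∑ u ∈ s, a u * Y u ω|)
      ≤ mean μ (fun ω => ∑ u ∈ s, |a u| * |X u ω - Y u ω|) := mean_mono hμ fun ω => by
        simp only [← Finset.sum_sub_distrib, ← mul_sub, ← abs_mul]
        exact Finset.abs_sum_le_sum_abs _ _
    _ = ∑ u ∈ s, |a u| * mean μ fun ω => |X u ω - Y u ω| := by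
        simp only [mean, dotProduct, Finset.mul_sum, mul_left_comm (μ _)]
        exact Finset.sum_comm

lemma abs_sub_le_one_of_mem_unitInterval {a b : ℝ} (ha : a ∈ unitInterval)
    (hb : b ∈ unitInterval) : |a - b| ≤ 1 :=
  abs_sub_le_of_nonneg_of_le ha.1 ha.2 hb.1 hb.2

lemma abs_expect_sub_le {T : Finset ι} (hT : T.Nonempty) {x : ι → ℝ} {bad : ι → Prop}
    [DecidablePred bad] {M e γ : ℝ} (he : 0 ≤ e) (hgood : ∀ τ ∈ T, ¬bad τ → |x τ - M| ≤ e)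
    (hx : ∀ τ ∈ T, |x τ - M| ≤ 1) (hbad : #{τ ∈ T | bad τ} ≤ γ * #T) :
    |𝔼 τ ∈ T, x τ - M| ≤ e + γ := by
  have hT0 : (0 : ℝ) < #T := by exact_mod_cast hT.card_pos
  calc |𝔼 τ ∈ T, x τ - M| = |𝔼 τ ∈ T, (x τ - M)| := by
        rw [Finset.expect_sub_distrib, Finset.expect_const hT]
    _ ≤ 𝔼 τ ∈ T, |x τ - M| := Finset.abs_expect_le _ _
    _ ≤ 𝔼 τ ∈ T, (e + if bad τ then 1 else 0) := Finset.expect_le_expect fun τ hτ => by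
        split_ifs with h
        · linarith [hx τ hτ]
        · linarith [hgood τ hτ h]
    _ = e + #{τ ∈ T | bad τ} / #T := by
        rw [Finset.expect_add_distrib, Finset.expect_const hT, Finset.expect_eq_sum_div_card,
          Finset.sum_boole]
    _ ≤ e + γ := by gcongr; rwa [div_le_iff₀ hT0]

end Mean

section Defect

variable {Ω : Type*} [Fintype Ω]

/-- The `ℓ¹` failure of `μ` to be invariant under the permutation `e`. -/
def l1Defect (μ : Ω → ℝ) (e : Equiv.Perm Ω) : ℝ := ∑ ω, |μ (e ω) - μ ω|

/-- The squared Hellinger distance between `μ` and its image under the permutation `e`. -/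
noncomputable def hellingerSq (μ : Ω → ℝ) (e : Equiv.Perm Ω) : ℝ := ∑ ω, (√(μ (e ω)) - √(μ ω)) ^ 2

lemma l1Defect_nonneg (μ : Ω → ℝ) (e : Equiv.Perm Ω) : 0 ≤ l1Defect μ e :=
  Finset.sum_nonneg fun _ _ => abs_nonneg _

lemma hellingerSq_nonneg (μ : Ω → ℝ) (e : Equiv.Perm Ω) : 0 ≤ hellingerSq μ e :=
  Finset.sum_nonneg fun _ _ => sq_nonneg _

lemma l1Defect_one (μ : Ω → ℝ) : l1Defect μ 1 = 0 := by
  simp only [l1Defect, Equiv.Perm.one_apply, sub_self, abs_zero, Finset.sum_const_zero]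

lemma l1Defect_mul_le (μ : Ω → ℝ) (e e' : Equiv.Perm Ω) :
    l1Defect μ (e * e') ≤ l1Defect μ e + l1Defect μ e' := by
  have reindex : l1Defect μ e = ∑ ω, |μ (e (e' ω)) - μ (e' ω)| :=
    (Equiv.sum_comp e' fun ω => |μ (e ω) - μ ω|).symm
  rw [reindex, l1Defect, l1Defect, ← Finset.sum_add_distrib]
  exact Finset.sum_le_sum fun ω _ => abs_sub_le _ _ _

lemma abs_mean_comp_sub_mean_le (μ : Ω → ℝ) (e : Equiv.Perm Ω) {g : Ω → ℝ}
    (hg : ∀ ω, g ω ∈ unitInterval) : |mean μ (g ∘ e) - mean μ g| ≤ l1Defect μ e⁻¹ := by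
  have reindex : mean μ (g ∘ e) = ∑ ω, μ (e⁻¹ ω) * g ω := by
    rw [mean, dotProduct, ← Equiv.sum_comp e⁻¹]
    simp only [Function.comp_apply, Equiv.Perm.inv_def, Equiv.apply_symm_apply]
  rw [reindex, mean, dotProduct, ← Finset.sum_sub_distrib]
  refine (Finset.abs_sum_le_sum_abs _ _).trans (Finset.sum_le_sum fun ω _ => ?_)
  rw [← sub_mul, abs_mul, abs_of_nonneg (hg ω).1]
  exact mul_le_of_le_one_right (abs_nonneg _) (hg ω).2

lemma l1Defect_le_two_mul_sqrt_hellingerSq {μ : Ω → ℝ} (hμ : μ ∈ stdSimplex ℝ Ω)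
    (e : Equiv.Perm Ω) : l1Defect μ e ≤ 2 * √(hellingerSq μ e) := by
  have hfactor (ω : Ω) :
      |√(μ (e ω)) - √(μ ω)| * (√(μ (e ω)) + √(μ ω)) = |μ (e ω) - μ ω| := by
    have hadd : 0 ≤ √(μ (e ω)) + √(μ ω) := add_nonneg (Real.sqrt_nonneg _) (Real.sqrt_nonneg _)
    rw [← abs_of_nonneg hadd, ← abs_mul, mul_comm, ← sq_sub_sq, Real.sq_sqrt (hμ.1 _),
      Real.sq_sqrt (hμ.1 _)]
  have hsum : ∑ ω, (√(μ (e ω)) + √(μ ω)) ^ 2 ≤ 4 :=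
    calc ∑ ω, (√(μ (e ω)) + √(μ ω)) ^ 2 ≤ ∑ ω, 2 * (μ (e ω) + μ ω) :=
          Finset.sum_le_sum fun ω _ => by
            simpa only [Real.sq_sqrt (hμ.1 _)] using add_sq_le (a := √(μ (e ω))) (b := √(μ ω))
      _ = 4 := by
          rw [← Finset.mul_sum, Finset.sum_add_distrib, Equiv.sum_comp e μ, hμ.2]; norm_num
  calc l1Defect μ e = ∑ ω, |√(μ (e ω)) - √(μ ω)| * (√(μ (e ω)) + √(μ ω)) :=
        Finset.sum_congr rfl fun ω _ => (hfactor ω).symm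
    _ ≤ √(∑ ω, |√(μ (e ω)) - √(μ ω)| ^ 2) * √(∑ ω, (√(μ (e ω)) + √(μ ω)) ^ 2) :=
        Real.sum_mul_le_sqrt_mul_sqrt _ _ _
    _ ≤ √(hellingerSq μ e) * √4 := by
        simp only [sq_abs]
        exact mul_le_mul_of_nonneg_left (Real.sqrt_le_sqrt hsum) (Real.sqrt_nonneg _)
    _ = 2 * √(hellingerSq μ e) := by
        rw [show (4 : ℝ) = 2 ^ 2 by norm_num, Real.sqrt_sq zero_le_two, mul_comm]

end Defect

section Exchange

variable {V : Type} [DecidableEq V]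

lemma exch_eq_comp_swap (x y : V) (η : V → Bool) : exch x y η = η ∘ Equiv.swap x y := by
  funext z
  simp only [exch, Function.comp_apply, Equiv.swap_apply_def]
  split_ifs <;> rfl

lemma exch_involutive (x y : V) : Function.Involutive (exch x y) := fun η => by
  simp only [exch_eq_comp_swap, Function.comp_assoc, ← Equiv.Perm.coe_mul, Equiv.swap_mul_self,
    Equiv.Perm.coe_one, Function.comp_id]

/-- The bond exchange `exch x y`, as a permutation of the configurations. -/
def exchPerm (x y : V) : Equiv.Perm (V → Bool) := (exch_involutive x y).toPerm

lemma exchPerm_mul_mul {x y z : V} (hxy : x ≠ y) (hxz : x ≠ z) :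
    exchPerm y z * exchPerm x y * exchPerm y z = exchPerm x z := by
  ext1 η
  change exch y z (exch x y (exch y z η)) = exch x z η
  simp only [exch_eq_comp_swap, Function.comp_assoc, ← Equiv.Perm.coe_mul]
  rw [Equiv.swap_mul_swap_mul_swap hxy hxz, Equiv.swap_comm]

lemma exchPerm_self (x : V) : exchPerm x x = 1 := by
  ext1 η
  change exch x x η = η
  rw [exch_eq_comp_swap, Equiv.swap_self, Equiv.coe_refl, Function.comp_id]

lemma exchPerm_comm (x y : V) : exchPerm x y = exchPerm y x := by
  ext1 η
  change exch x y η = exch y x η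
  rw [exch_eq_comp_swap, exch_eq_comp_swap, Equiv.swap_comm]

lemma image_swap_eq_insert_erase {A : Finset V} {a b : V} (ha : a ∈ A) (hb : b ∉ A) :
    A.image (Equiv.swap a b) = insert b (A.erase a) := by
  have hfix : (A.erase a).image (Equiv.swap a b) = A.erase a := by
    refine (Finset.image_congr fun x hx => ?_).trans Finset.image_id
    have hx := Finset.mem_erase.1 hx
    exact Equiv.swap_apply_of_ne_of_ne hx.1 (ne_of_mem_of_not_mem hx.2 hb)
  conv_lhs => rw [← Finset.insert_erase ha, Finset.image_insert, Equiv.swap_apply_left, hfix]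

lemma l1Defect_exchPerm_le [Fintype V] (μ : (V → Bool) → ℝ) (x y z : V) :
    l1Defect μ (exchPerm x z) ≤ l1Defect μ (exchPerm x y) + 2 * l1Defect μ (exchPerm y z) := by
  have hxy0 := l1Defect_nonneg μ (exchPerm x y)
  have hyz0 := l1Defect_nonneg μ (exchPerm y z)
  obtain rfl | hxz := eq_or_ne x z
  · rw [exchPerm_self, l1Defect_one]
    positivity
  obtain rfl | hxy := eq_or_ne x y
  · linarith
  rw [← exchPerm_mul_mul hxy hxz]
  linarith [l1Defect_mul_le μ (exchPerm y z * exchPerm x y) (exchPerm y z),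
    l1Defect_mul_le μ (exchPerm y z) (exchPerm x y)]

end Exchange

section Occupation

variable {V V' : Type*}

/-- The indicator that all sites of `A` are occupied. -/
def occ (A : Finset V) (η : V → Bool) : ℝ := if ∀ a ∈ A, η a = true then 1 else 0

lemma occ_mem_unitInterval (A : Finset V) (η : V → Bool) : occ A η ∈ unitInterval := by
  unfold occ
  split_ifs
  exacts [unitInterval.one_mem, unitInterval.zero_mem]

lemma occ_empty (η : V → Bool) : occ ∅ η = 1 := by simp [occ]

lemma occ_singleton (a : V) (η : V → Bool) : occ {a} η = if η a then 1 else 0 := by simp [occ]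

lemma prod_occ_singleton (U : Finset V) (η : V → Bool) : ∏ u ∈ U, occ {u} η = occ U η := by
  simp only [occ, Finset.prod_boole, Finset.mem_singleton, forall_eq]

lemma occ_union [DecidableEq V] (A B : Finset V) (η : V → Bool) :
    occ (A ∪ B) η = occ A η * occ B η := by
  simp only [occ, Finset.forall_mem_union, ite_and, ite_mul, one_mul, zero_mul]

lemma occ_image [DecidableEq V'] (A : Finset V) (φ : V → V') (η : V' → Bool) :
    occ (A.image φ) η = occ A (η ∘ φ) := by
  simp only [occ, Finset.forall_mem_image, Function.comp_apply]

end Occupation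

section Exchangeable

variable {V : Type} [Fintype V] [DecidableEq V] {μ : (V → Bool) → ℝ} {W : Set V} {D : ℝ}

/-- `μ` is invariant up to an `ℓ¹` error `D` under the exchange of any two sites of `W`. -/
def IsApproxExchangeable (μ : (V → Bool) → ℝ) (W : Set V) (D : ℝ) : Prop :=
  ∀ a ∈ W, ∀ b ∈ W, l1Defect μ (exchPerm a b) ≤ D

lemma abs_mean_occ_insert_erase_sub_le (μ : (V → Bool) → ℝ) {A : Finset V} {a b : V}
    (ha : a ∈ A) (hb : b ∉ A) :
    |mean μ (occ (insert b (A.erase a))) - mean μ (occ A)| ≤ l1Defect μ (exchPerm a b) := by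
  have hocc : occ (insert b (A.erase a)) = occ A ∘ exchPerm a b := by
    funext η
    rw [← image_swap_eq_insert_erase ha hb, occ_image, ← exch_eq_comp_swap]
    rfl
  rw [hocc]
  exact abs_mean_comp_sub_mean_le μ (exchPerm a b) (occ_mem_unitInterval A)

lemma IsApproxExchangeable.abs_mean_occ_sub_mean_occ_le (hμ : IsApproxExchangeable μ W D)
    {A B : Finset V} (hA : ↑A ⊆ W) (hB : ↑B ⊆ W) (hcard : #A = #B) :
    |mean μ (occ A) - mean μ (occ B)| ≤ #(A \ B) * D := by
  induction hn : #(A \ B) generalizing A with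
  | zero =>
    have hAB : A ⊆ B := Finset.sdiff_eq_empty_iff_subset.1 (Finset.card_eq_zero.1 hn)
    simp [Finset.eq_of_subset_of_card_le hAB hcard.ge]
  | succ n ih =>
    obtain ⟨a, ha⟩ : (A \ B).Nonempty := Finset.card_pos.1 (by omega)
    obtain ⟨b, hb⟩ : (B \ A).Nonempty :=
      Finset.card_pos.1 (by rw [← Finset.card_sdiff_comm hcard]; omega)
    obtain ⟨haA, -⟩ := Finset.mem_sdiff.1 ha
    obtain ⟨hbB, hbA⟩ := Finset.mem_sdiff.1 hb
    have hswap := (abs_mean_occ_insert_erase_sub_le μ haA hbA).trans (hμ a (hA haA) b (hB hbB))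
    have hsub : (insert b (A.erase a) : Finset V) ≤ W := by
      rw [Finset.coe_insert]
      exact Set.insert_subset (hB hbB)
        ((Finset.coe_subset.2 (Finset.erase_subset a A)).trans hA)
    have hcard' : #(insert b (A.erase a)) = #B := by
      rw [Finset.card_insert_of_notMem fun h => hbA (Finset.mem_of_mem_erase h),
        Finset.card_erase_add_one haA, hcard]
    have hsdiff : #(insert b (A.erase a) \ B) = n := by
      rw [Finset.insert_sdiff_of_mem _ hbB, Finset.erase_sdiff_comm,
        Finset.card_erase_of_mem ha, hn, Nat.add_sub_cancel]
    have hrest := ih hsub hcard' hsdiff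
    rw [abs_sub_comm] at hswap
    push_cast
    linarith [abs_sub_le (mean μ (occ A)) (mean μ (occ (insert b (A.erase a)))) (mean μ (occ B))]

lemma IsApproxExchangeable.exists_abs_mean_occ_sub_le (hμ : IsApproxExchangeable μ W D)
    (hμ1 : μ ∈ stdSimplex ℝ (V → Bool)) (hD : 0 ≤ D) (n : ℕ) :
    ∃ M ∈ unitInterval, ∀ A : Finset V, ↑A ⊆ W → #A = n → |mean μ (occ A) - M| ≤ n * D := by
  by_cases h : ∃ B : Finset V, ↑B ⊆ W ∧ #B = n
  · obtain ⟨B, hB, rfl⟩ := h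
    refine ⟨mean μ (occ B), mean_mem_unitInterval hμ1 (occ_mem_unitInterval B), fun A hA hAB =>
      (hμ.abs_mean_occ_sub_mean_occ_le hA hB hAB).trans ?_⟩
    rw [← hAB]
    gcongr
    exact Finset.sdiff_subset
  · exact ⟨0, unitInterval.zero_mem, fun A hA hAn => absurd ⟨A, hA, hAn⟩ h⟩

end Exchangeable

section Density

variable {V ι κ : Type*}

/-- The empirical density `𝔼_{τ ∈ T} η (p τ)` along the family of sites `p`. -/
noncomputable def density (T : Finset ι) (p : ι → V) (η : V → Bool) : ℝ := 𝔼 τ ∈ T, occ {p τ} η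

lemma density_mem_unitInterval {T : Finset ι} (hT : T.Nonempty) (p : ι → V) (η : V → Bool) :
    density T p η ∈ unitInterval :=
  ⟨Finset.expect_nonneg fun τ _ => (occ_mem_unitInterval {p τ} η).1,
    Finset.expect_le hT fun τ _ => (occ_mem_unitInterval {p τ} η).2⟩

lemma occ_mul_density_pow_mem_unitInterval {T : Finset ι} (hT : T.Nonempty) (p : ι → V)
    (A : Finset V) (j : ℕ) (η : V → Bool) : occ A η * density T p η ^ j ∈ unitInterval :=
  unitInterval.mul_mem (occ_mem_unitInterval A η)
    (unitInterval.submonoid.pow_mem (density_mem_unitInterval hT p η) j)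

lemma occ_mul_density_pow_succ [DecidableEq V] (T : Finset ι) (p : ι → V) (A : Finset V) (j : ℕ)
    (η : V → Bool) :
    occ A η * density T p η ^ (j + 1) = 𝔼 τ ∈ T, occ (A ∪ {p τ}) η * density T p η ^ j := by
  simp only [occ_union, ← Finset.expect_mul, ← Finset.mul_expect]
  rw [density, pow_succ', mul_assoc]

lemma card_filter_mem_le_of_card_filter_eq_le [DecidableEq V] {T : Finset ι} {p : ι → V} {β : ℝ}
    (hβ : ∀ v, #{τ ∈ T | p τ = v} ≤ β * #T) (A : Finset V) :
    #{τ ∈ T | p τ ∈ A} ≤ #A * β * #T := by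
  rw [← Finset.sum_card_fiberwise_eq_card_filter, Nat.cast_sum, mul_assoc, ← nsmul_eq_mul]
  exact Finset.sum_le_card_nsmul _ _ _ fun v _ => hβ v

end Density

section Moments

variable {V : Type} [Fintype V] [DecidableEq V] {ι κ : Type*} {μ : (V → Bool) → ℝ} {W : Set V}
  {T : Finset ι} {p : ι → V} {β : ℝ}

lemma abs_mean_occ_mul_density_pow_sub_le (hμ : μ ∈ stdSimplex ℝ (V → Bool)) (hT : T.Nonempty)
    (hpW : ∀ τ ∈ T, p τ ∈ W) (hβ0 : 0 ≤ β) (hβ : ∀ v, #{τ ∈ T | p τ = v} ≤ β * #T) {n : ℕ}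
    {M δ : ℝ} (hδ : 0 ≤ δ) (hM : M ∈ unitInterval)
    (hocc : ∀ A : Finset V, ↑A ⊆ W → #A = n → |mean μ (occ A) - M| ≤ δ)
    {j : ℕ} {A : Finset V} (hA : ↑A ⊆ W) (hn : #A + j = n) :
    |mean μ (fun η => occ A η * density T p η ^ j) - M| ≤ δ + j * (n * β) := by
  induction j generalizing A with
  | zero => simpa using hocc A hA hn
  | succ j ih =>
    simp only [occ_mul_density_pow_succ, mean_expect]
    have hfresh (τ : ι) (hτ : τ ∈ T) (hτA : p τ ∉ A) :
        |mean μ (fun η => occ (A ∪ {p τ}) η * density T p η ^ j) - M| ≤ δ + j * (n * β) := by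
      refine ih ?_ ?_
      · rw [Finset.coe_union, Finset.coe_singleton]
        exact Set.union_subset hA (Set.singleton_subset_iff.2 (hpW τ hτ))
      · rw [Finset.card_union_of_disjoint (Finset.disjoint_singleton_right.2 hτA),
          Finset.card_singleton]
        omega
    have hcoll : #{τ ∈ T | p τ ∈ A} ≤ n * β * #T := by
      refine (card_filter_mem_le_of_card_filter_eq_le hβ A).trans ?_
      gcongr
      omega
    have hunit (τ : ι) (_ : τ ∈ T) :
        |mean μ (fun η => occ (A ∪ {p τ}) η * density T p η ^ j) - M| ≤ 1 :=
      abs_sub_le_one_of_mem_unitInterval (mean_mem_unitInterval hμ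
        (occ_mul_density_pow_mem_unitInterval hT p _ j)) hM
    refine (abs_expect_sub_le hT (by positivity) hfresh hunit hcoll).trans_eq ?_
    push_cast
    ring

lemma abs_mean_expect_occ_sq_sub_le (hμ : μ ∈ stdSimplex ℝ (V → Bool)) {F : Finset κ}
    (hF : F.Nonempty) {A : κ → Finset V} {k : ℕ} (hAW : ∀ σ ∈ F, ↑(A σ) ⊆ W)
    (hAk : ∀ σ ∈ F, #(A σ) = k) {M δ γ : ℝ} (hδ : 0 ≤ δ) (hM : M ∈ unitInterval)
    (hocc : ∀ A : Finset V, ↑A ⊆ W → #A = 2 * k → |mean μ (occ A) - M| ≤ δ)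
    (hγ : #{q ∈ F ×ˢ F | ¬Disjoint (A q.1) (A q.2)} ≤ γ * #(F ×ˢ F)) :
    |mean μ (fun η => (𝔼 σ ∈ F, occ (A σ) η) ^ 2) - M| ≤ δ + γ := by
  have hsq (η : V → Bool) :
      (𝔼 σ ∈ F, occ (A σ) η) ^ 2 = 𝔼 q ∈ F ×ˢ F, occ (A q.1 ∪ A q.2) η := by
    simp only [sq, Finset.expect_mul_expect, Finset.expect_product, occ_union]
  simp only [hsq, mean_expect]
  refine abs_expect_sub_le (hF.product hF) hδ (fun q hq hdisj => ?_) (fun q _ => ?_) hγ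
  · obtain ⟨h1, h2⟩ := Finset.mem_product.1 hq
    refine hocc _ ?_ ?_
    · rw [Finset.coe_union]
      exact Set.union_subset (hAW _ h1) (hAW _ h2)
    · rw [Finset.card_union_of_disjoint (not_not.1 hdisj), hAk _ h1, hAk _ h2, two_mul]
  · exact abs_sub_le_one_of_mem_unitInterval (mean_mem_unitInterval hμ (occ_mem_unitInterval _)) hM

/-- All three second moments of `𝔼_σ ∏_{a ∈ A σ} η a` and `ρ ^ k` are close to the common
value of the `2k`-point occupation probabilities. -/
lemma IsApproxExchangeable.mean_abs_expect_occ_sub_density_pow_le {D : ℝ}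
    (hD : IsApproxExchangeable μ W D) (hD0 : 0 ≤ D) (hμ : μ ∈ stdSimplex ℝ (V → Bool))
    (hT : T.Nonempty) (hpW : ∀ τ ∈ T, p τ ∈ W) (hβ0 : 0 ≤ β)
    (hβ : ∀ v, #{τ ∈ T | p τ = v} ≤ β * #T) {F : Finset κ} (hF : F.Nonempty)
    {A : κ → Finset V} {k : ℕ} (hAW : ∀ σ ∈ F, ↑(A σ) ⊆ W) (hAk : ∀ σ ∈ F, #(A σ) = k) {γ : ℝ}
    (hγ : #{q ∈ F ×ˢ F | ¬Disjoint (A q.1) (A q.2)} ≤ γ * #(F ×ˢ F)) :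
    mean μ (fun η => |𝔼 σ ∈ F, occ (A σ) η - density T p η ^ k|) ≤
      √(8 * k * D + 8 * k ^ 2 * β + γ) := by
  obtain ⟨M, hM, hocc⟩ := hD.exists_abs_mean_occ_sub_le hμ hD0 (2 * k)
  have hδ : 0 ≤ ↑(2 * k) * D := by positivity
  have hmoment {j : ℕ} {B : Finset V} (hB : ↑B ⊆ W) (hj : #B + j = 2 * k) :=
    abs_mean_occ_mul_density_pow_sub_le hμ hT hpW hβ0 hβ hδ hM hocc hB hj
  have hXY : |mean μ (fun η => (𝔼 σ ∈ F, occ (A σ) η) * density T p η ^ k) - M| ≤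
      ↑(2 * k) * D + k * (↑(2 * k) * β) := by
    simp only [Finset.expect_mul, mean_expect]
    simpa using abs_expect_sub_le (γ := 0) (bad := fun _ => False) hF (by positivity)
      (fun σ hσ _ => hmoment (hAW σ hσ) (by rw [hAk σ hσ, two_mul]))
      (fun σ _ => abs_sub_le_one_of_mem_unitInterval (mean_mem_unitInterval hμ
        (occ_mul_density_pow_mem_unitInterval hT p (A σ) k)) hM) (by simp)
  have hYY : |mean μ (fun η => (density T p η ^ k) ^ 2) - M| ≤
      ↑(2 * k) * D + ↑(2 * k) * (↑(2 * k) * β) := by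
    simpa only [occ_empty, one_mul, pow_mul'] using
      hmoment (j := 2 * k) (B := ∅) (by simp) (by simp)
  refine (mean_abs_sub_le_sqrt hμ _ _
    (abs_mean_expect_occ_sq_sub_le hμ hF hAW hAk hδ hM hocc hγ) hXY hYY).trans_eq ?_
  congr 1
  push_cast
  ring

end Moments

section QuotientConfigurations

variable {G : Type} [Group G] {N : Subgroup G} [N.Normal]

/-- The `N`-periodic configuration on the group seen by an observer placed at the vertex `v`. -/
def viewFrom (η : Conf N) (v : G ⧸ N) : G → Bool := fun z => η (v * z)

lemma viewFrom_out_inv_mul (η : Conf N) (v : G ⧸ N) :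
    (fun z => viewFrom η v ((Quotient.out v)⁻¹ * z)) = liftZ N η := by
  funext z
  have hv : ((Quotient.out v : G) : G ⧸ N) = v := QuotientGroup.out_eq' v
  simp only [viewFrom, liftZ, QuotientGroup.mk_mul, QuotientGroup.mk_inv, hv,
    mul_inv_cancel_left]

lemma fQ_eq_viewFrom [DecidableEq G] {S : Finset G} (f : LocalBundleV S) (v : G ⧸ N)
    (η : Conf N) : fQ N f v η = f.f 1 (viewFrom η v) := by
  rw [fQ, ← f.invariant (Quotient.out v) 1, viewFrom_out_inv_mul, mul_one]

lemma cQ_eq_viewFrom [DecidableEq G] {S : Finset G} (c : JumpRate S) (v : G ⧸ N) (s : Gen S)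
    (η : Conf N) : cQ N c v s η = c.c 1 s (viewFrom η v) := by
  rw [cQ, ← c.invariant (Quotient.out v) 1, viewFrom_out_inv_mul, mul_one]

lemma exch_apply_of_injOn {α β : Type} [DecidableEq α] [DecidableEq β] {φ : α → β} {W : Set α}
    (hφ : Set.InjOn φ W) {x y z : α} (hx : x ∈ W) (hy : y ∈ W) (hz : z ∈ W) (η : β → Bool) :
    exch (φ x) (φ y) η (φ z) = exch x y (η ∘ φ) z := by
  simp only [exch, hφ.eq_iff hz hx, hφ.eq_iff hz hy, Function.comp_apply]

lemma exchQ_actQ [DecidableEq (G ⧸ N)] (v w : G ⧸ N) (η : Conf N) :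
    exch v (v * w) (actQ N v η) = actQ N v (exch 1 w η) := by
  funext z
  have h := exch_apply_of_injOn (mul_right_injective v⁻¹).injOn (Set.mem_univ v)
    (Set.mem_univ (v * w)) (Set.mem_univ z) η
  simp only [inv_mul_cancel, inv_mul_cancel_left] at h
  exact h.symm

/-- The sites of the Cayley graph on which the rate at an edge with origin `1` may depend. -/
def rateWindow [DecidableEq G] {S : Finset G} (c : JumpRate S) : Finset G :=
  ballF S c.r ∪ S * ballF S c.r

lemma cQ_exchQ [DecidableEq G] [DecidableEq (G ⧸ N)] {S : Finset G} (c : JumpRate S)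
    (hN : Set.InjOn ((↑) : G → G ⧸ N) (rateWindow c)) (v : G ⧸ N) (s : Gen S) (η : Conf N) :
    cQ N c v s (exchQ N v s η) = cQ N c v s η := by
  have hball (z : G) (hz : z ∈ ballF S c.r) : z ∈ (rateWindow c : Set G) :=
    Finset.mem_union_left _ hz
  have hmul (z : G) (hz : z ∈ ballF S c.r) : s * z ∈ (rateWindow c : Set G) :=
    Finset.mem_union_right _ (Finset.mul_mem_mul s.2 hz)
  have hinj : Set.InjOn (fun z : G => v * z) (rateWindow c) :=
    (mul_right_injective v).comp_injOn hN
  rw [cQ_eq_viewFrom, cQ_eq_viewFrom, ← c.symm_exch 1 s (viewFrom η v)]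
  refine c.localized 1 s _ _ fun z hz => ?_
  simp only [one_mul, Finset.mem_union, Finset.mem_image, exists_eq_right] at hz
  have hzW : z ∈ (rateWindow c : Set G) := by
    rcases hz with hz | ⟨w, hw, rfl⟩
    exacts [hball z hz, hmul w hw]
  have h := exch_apply_of_injOn hinj (hball 1 (one_mem_ballF S c.r))
    (mul_one (s : G) ▸ hmul 1 (one_mem_ballF S c.r)) hzW η
  simp only [QuotientGroup.mk_one, mul_one] at h
  rw [one_mul]
  exact h

end QuotientConfigurations

section DirichletForm

lemma sum_mul_mul_sub_eq_neg_half_sum_sq {Ω : Type*} [Fintype Ω] {e : Ω → Ω}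
    (he : Function.Involutive e) {r : Ω → ℝ} (hr : ∀ ω, r (e ω) = r ω) (h : Ω → ℝ) :
    ∑ ω, r ω * (h ω * (h (e ω) - h ω)) = -(1 / 2 * ∑ ω, r ω * (h (e ω) - h ω) ^ 2) := by
  have reflected : ∑ ω, r ω * (h ω * (h (e ω) - h ω)) =
      ∑ ω, r ω * (h (e ω) * (h ω - h (e ω))) := by
    rw [← Equiv.sum_comp he.toPerm]
    simp only [Function.Involutive.coe_toPerm, hr, he _]
  have summed : ∑ ω, r ω * (h ω * (h (e ω) - h ω)) + ∑ ω, r ω * (h (e ω) * (h ω - h (e ω))) =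
      -∑ ω, r ω * (h (e ω) - h ω) ^ 2 := by
    rw [← Finset.sum_add_distrib, ← Finset.sum_neg_distrib]
    exact Finset.sum_congr rfl fun ω _ => by ring
  linarith

lemma hellingerSq_eq_of_semiconj {Ω : Type*} [Fintype Ω] {μ : Ω → ℝ} {a e e' : Equiv.Perm Ω}
    (hμ : ∀ ω, μ (a ω) = μ ω) (h : Function.Semiconj a e e') :
    hellingerSq μ e' = hellingerSq μ e := by
  rw [hellingerSq, ← Equiv.sum_comp a]
  simp only [← h.eq, hμ, hellingerSq]

variable {G : Type} [Group G] {N : Subgroup G} [Fintype (G ⧸ N)] [DecidableEq (G ⧸ N)]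

lemma nuU_mul_sq_sqrtDens_sub (μ : Conf N → ℝ) (η ξ : Conf N) :
    nuU N η * (sqrtDens N μ ξ - sqrtDens N μ η) ^ 2 = (√(μ ξ) - √(μ η)) ^ 2 := by
  have hcard : (Fintype.card (Conf N) : ℝ) ≠ 0 := Nat.cast_ne_zero.2 Fintype.card_ne_zero
  simp only [nuU, sqrtDens, dens, Real.sqrt_mul (Nat.cast_nonneg _), ← mul_sub, mul_pow,
    Real.sq_sqrt (Nat.cast_nonneg _), inv_mul_cancel_left₀ hcard]

variable [N.Normal] {μ : Conf N → ℝ}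

lemma hellingerSq_exchPerm_mul (hμ : IsInvariant N μ) (v w : G ⧸ N) :
    hellingerSq μ (exchPerm v (v * w)) = hellingerSq μ (exchPerm 1 w) :=
  hellingerSq_eq_of_semiconj (a := (Equiv.mulLeft v).arrowCongr (Equiv.refl Bool)) (hμ v)
    fun η => (exchQ_actQ v w η).symm

variable [DecidableEq G] {S : Finset G} {c : JumpRate S}

lemma ImGen_eq_ImSum (hN : Set.InjOn ((↑) : G → G ⧸ N) (rateWindow c)) (μ : Conf N → ℝ) :
    ImGen N c μ = ImSum N c μ := by
  have bond (e : (G ⧸ N) × Gen S) :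
      ∑ η, nuU N η * (sqrtDens N μ η * (cQ N c e.1 e.2 η *
          (sqrtDens N μ (exchQ N e.1 (e.2 : G) η) - sqrtDens N μ η))) =
        -(1 / 2 * ∑ η, nuU N η * (cQ N c e.1 e.2 η *
          (sqrtDens N μ (exchQ N e.1 (e.2 : G) η) - sqrtDens N μ η) ^ 2)) := by
    have h := sum_mul_mul_sub_eq_neg_half_sum_sq (e := exchQ N e.1 (e.2 : G))
      (exch_involutive _ _) (r := fun η => nuU N η * cQ N c e.1 e.2 η)
      (fun η => congrArg (nuU N η * ·) (cQ_exchQ c hN e.1 e.2 η)) (sqrtDens N μ)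
    simpa only [mul_assoc, mul_left_comm (sqrtDens N μ _)] using h
  simp only [ImGen, Lgen, ImSum, Finset.mul_sum]
  rw [Finset.sum_comm, ← Finset.sum_neg_distrib]
  refine Finset.sum_congr rfl fun e _ => ?_
  rw [bond, neg_neg, Finset.mul_sum]

lemma half_mul_card_mul_hellingerSq_le_ImSum (hμ : IsInvariant N μ) (s : Gen S) :
    c.c₀ / 2 * (Fintype.card (G ⧸ N) * hellingerSq μ (exchPerm 1 ((s : G) : G ⧸ N))) ≤
      ImSum N c μ := by
  have hterm (v : G ⧸ N) (s : Gen S) (η : Conf N) :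
      c.c₀ * (√(μ (exchPerm v (v * ((s : G) : G ⧸ N)) η)) - √(μ η)) ^ 2 ≤
        nuU N η * (cQ N c v s η *
          (sqrtDens N μ (exchQ N v (s : G) η) - sqrtDens N μ η) ^ 2) := by
    rw [mul_left_comm, nuU_mul_sq_sqrtDens_sub]
    exact mul_le_mul_of_nonneg_right (c.nondeg _ _ _) (sq_nonneg _)
  have hbond (v : G ⧸ N) (s : Gen S) :
      c.c₀ * hellingerSq μ (exchPerm 1 ((s : G) : G ⧸ N)) ≤ ∑ η, nuU N η * (cQ N c v s η *
        (sqrtDens N μ (exchQ N v (s : G) η) - sqrtDens N μ η) ^ 2) := by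
    rw [← hellingerSq_exchPerm_mul hμ v, hellingerSq, Finset.mul_sum]
    exact Finset.sum_le_sum fun η _ => hterm v s η
  have hvertex (v : G ⧸ N) : c.c₀ * hellingerSq μ (exchPerm 1 ((s : G) : G ⧸ N)) ≤
      ∑ s : Gen S, ∑ η, nuU N η * (cQ N c v s η *
        (sqrtDens N μ (exchQ N v (s : G) η) - sqrtDens N μ η) ^ 2) :=
    (hbond v s).trans (Finset.single_le_sum (fun s _ =>
      (mul_nonneg c.c₀_pos.le (hellingerSq_nonneg μ _)).trans (hbond v s)) (Finset.mem_univ s))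
  calc c.c₀ / 2 * (Fintype.card (G ⧸ N) * hellingerSq μ (exchPerm 1 ((s : G) : G ⧸ N)))
      = 1 / 2 * ∑ _v : G ⧸ N, c.c₀ * hellingerSq μ (exchPerm 1 ((s : G) : G ⧸ N)) := by
        rw [Finset.sum_const, Finset.card_univ, nsmul_eq_mul]
        ring
    _ ≤ ImSum N c μ := by
        rw [ImSum, Fintype.sum_prod_type]
        gcongr with v
        exact hvertex v

lemma l1Defect_exchPerm_edge_le (hN : Set.InjOn ((↑) : G → G ⧸ N) (rateWindow c))
    (hμ : IsProb N μ) (hinv : IsInvariant N μ) {C t : ℝ} (hC : 0 ≤ C) (ht : 0 < t)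
    (hI : ImGen N c μ ≤ C * N.index / t) (v : G ⧸ N) (s : Gen S) :
    l1Defect μ (exchPerm v (v * ((s : G) : G ⧸ N))) ≤ 2 * √(2 * C / c.c₀) / √t := by
  have hcard : (0 : ℝ) < Fintype.card (G ⧸ N) := by exact_mod_cast Fintype.card_pos
  have henergy := (half_mul_card_mul_hellingerSq_le_ImSum (c := c) hinv s).trans
    ((ImGen_eq_ImSum hN μ).symm.trans_le hI)
  have hhell : hellingerSq μ (exchPerm 1 ((s : G) : G ⧸ N)) ≤ 2 * C / c.c₀ / t := by
    rw [Subgroup.index, Nat.card_eq_fintype_card, le_div_iff₀ ht] at henergy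
    rw [le_div_iff₀ ht, le_div_iff₀ c.c₀_pos]
    refine le_of_mul_le_mul_left ?_ hcard
    linarith
  calc l1Defect μ (exchPerm v (v * ((s : G) : G ⧸ N)))
      ≤ 2 * √(hellingerSq μ (exchPerm 1 ((s : G) : G ⧸ N))) := by
        rw [← hellingerSq_exchPerm_mul hinv v]
        exact l1Defect_le_two_mul_sqrt_hellingerSq hμ _
    _ ≤ 2 * √(2 * C / c.c₀) / √t := by
        rw [mul_div_assoc, ← Real.sqrt_div (div_nonneg (mul_nonneg zero_le_two hC) c.c₀_pos.le)]
        gcongr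

end DirichletForm

section BallChaining

variable {G : Type} [Group G] [DecidableEq G] {N : Subgroup G} [N.Normal] [Fintype (G ⧸ N)]
  [DecidableEq (G ⧸ N)] {S : Finset G} {μ : Conf N → ℝ} {κ : ℝ}

lemma l1Defect_exchPerm_one_le_of_mem_ballF
    (hμ : ∀ (v : G ⧸ N) (s : Gen S), l1Defect μ (exchPerm v (v * ((s : G) : G ⧸ N))) ≤ κ)
    (hκ : 0 ≤ κ) {n : ℕ} {x : G} (hx : x ∈ ballF S n) :
    l1Defect μ (exchPerm 1 (x : G ⧸ N)) ≤ 2 * n * κ := by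
  induction n generalizing x with
  | zero =>
    obtain rfl := Finset.mem_singleton.1 hx
    simp [exchPerm_self, l1Defect_one]
  | succ n ih =>
    push_cast
    obtain hx | hx := Finset.mem_union.1 hx
    · linarith [ih hx]
    · obtain ⟨y, hy, s, hs, rfl⟩ := Finset.mem_mul.1 hx
      rw [QuotientGroup.mk_mul]
      linarith [l1Defect_exchPerm_le μ 1 (y : G ⧸ N) (y * s), ih hy, hμ y ⟨s, hs⟩]

lemma isApproxExchangeable_image_ballF
    (hμ : ∀ (v : G ⧸ N) (s : Gen S), l1Defect μ (exchPerm v (v * ((s : G) : G ⧸ N))) ≤ κ)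
    (hκ : 0 ≤ κ) (n : ℕ) :
    IsApproxExchangeable μ (((↑) : G → G ⧸ N) '' ballF S n) (3 * (2 * n * κ)) := by
  rintro _ ⟨x, hx, rfl⟩ _ ⟨y, hy, rfl⟩
  have hx1 := l1Defect_exchPerm_one_le_of_mem_ballF hμ hκ hx
  rw [exchPerm_comm] at hx1
  linarith [l1Defect_exchPerm_le μ (x : G ⧸ N) 1 y,
    l1Defect_exchPerm_one_le_of_mem_ballF hμ hκ hy]

end BallChaining

section PolynomialExpansion

variable {ι : Type*} [DecidableEq ι]

/-- The expectation of `g` when the sites `b ∈ B` are occupied independently with probabilities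
`w b` and the other sites are empty; for constant `w` this is `expCyl`. -/
noncomputable def bernoulliMean (B : Finset ι) (w : ι → ℝ) (g : (ι → Bool) → ℝ) : ℝ :=
  ∑ ζ : ({a // a ∈ B} → Bool), (∏ a : {a // a ∈ B}, bw (w a) (ζ a)) *
    g (fun z => if h : z ∈ B then ζ ⟨z, h⟩ else false)

lemma bernoulliMean_occ_singleton (B : Finset ι) {g : (ι → Bool) → ℝ} {η : ι → Bool}
    (hg : ∀ η', (∀ z ∈ B, η z = η' z) → g η = g η') :
    bernoulliMean B (fun a => occ {a} η) g = g η := by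
  rw [bernoulliMean, Fintype.sum_eq_single fun b : {a // a ∈ B} => η b]
  · rw [Finset.prod_eq_one, one_mul]
    · exact (hg _ fun z hz => by simp [hz]).symm
    · intro b _
      cases h : η b <;> simp [bw, occ, h]
  · intro ζ hζ
    obtain ⟨b, hb⟩ := Function.ne_iff.1 hζ
    rw [Finset.prod_eq_zero (Finset.mem_univ b), zero_mul]
    cases h : η b <;> cases h' : ζ b <;> simp_all [bw, occ]

lemma prod_bw_eq_sum_powerset (B : Finset ι) (w : ι → ℝ) (η : ι → Bool) :
    ∏ b ∈ B, bw (w b) (η b) = ∑ U ∈ B.powerset,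
      ((∏ u ∈ U, if η u then 1 else -1) * ∏ u ∈ B \ U, if η u then 0 else 1) * ∏ u ∈ U, w u := by
  have hbw (b : ι) : bw (w b) (η b) =
      (if η b then 1 else -1) * w b + if η b then 0 else 1 := by
    cases η b
    · simp only [bw, Bool.false_eq_true, if_false]
      ring
    · simp [bw]
  simp only [hbw, Finset.prod_add, Finset.prod_mul_distrib, mul_right_comm]

lemma exists_forall_bernoulliMean_eq_sum_powerset (B : Finset ι) (g : (ι → Bool) → ℝ) :
    ∃ a : Finset ι → ℝ, ∀ w : ι → ℝ,
      bernoulliMean B w g = ∑ U ∈ B.powerset, a U * ∏ u ∈ U, w u := by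
  let e (ζ : {a // a ∈ B} → Bool) (z : ι) : Bool := if h : z ∈ B then ζ ⟨z, h⟩ else false
  refine ⟨fun U => ∑ ζ, ((∏ u ∈ U, if e ζ u then 1 else -1) *
    ∏ u ∈ B \ U, if e ζ u then 0 else 1) * g (e ζ), fun w => ?_⟩
  have hprod (ζ : {a // a ∈ B} → Bool) :
      ∏ b : {a // a ∈ B}, bw (w b) (ζ b) = ∏ b ∈ B, bw (w b) (e ζ b) := by
    rw [← Finset.prod_coe_sort B]
    exact Finset.prod_congr rfl fun b _ => by simp [e]
  simp only [bernoulliMean, hprod, prod_bw_eq_sum_powerset, Finset.sum_mul]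
  rw [Finset.sum_comm]
  refine Finset.sum_congr rfl fun U _ => Finset.sum_congr rfl fun ζ _ => ?_
  exact mul_right_comm _ _ _

variable {G : Type} [Group G] [DecidableEq G] {S : Finset G}

/-- The coefficients of the expansion `f_o = ∑_U a_U ∏_{u ∈ U} η_u` of a local function bundle as a
multi-affine polynomial in the occupation variables; substituting `ρ` for all of them gives the
global average. -/
noncomputable def LocalBundleV.coeff (f : LocalBundleV S) : Finset G → ℝ :=
  (exists_forall_bernoulliMean_eq_sum_powerset (ballF S f.r) (f.f 1)).choose

lemma LocalBundleV.bernoulliMean_eq_sum_coeff (f : LocalBundleV S) (w : G → ℝ) :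
    bernoulliMean (ballF S f.r) w (f.f 1) =
      ∑ U ∈ (ballF S f.r).powerset, f.coeff U * ∏ u ∈ U, w u :=
  (exists_forall_bernoulliMean_eq_sum_powerset (ballF S f.r) (f.f 1)).choose_spec w

lemma LocalBundleV.apply_one_eq_sum_coeff (f : LocalBundleV S) (η : G → Bool) :
    f.f 1 η = ∑ U ∈ (ballF S f.r).powerset, f.coeff U * occ U η := by
  have hlocal (η' : G → Bool) (h : ∀ z ∈ ballF S f.r, η z = η' z) : f.f 1 η = f.f 1 η' :=
    f.localized 1 η η' (by simpa only [one_mul, Finset.image_id'] using h)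
  simpa only [prod_occ_singleton, bernoulliMean_occ_singleton _ hlocal] using
    f.bernoulliMean_eq_sum_coeff fun a => occ {a} η

lemma globalAvg_eq_sum_coeff (f : LocalBundleV S) (ρ : ℝ) :
    globalAvg f ρ = ∑ U ∈ (ballF S f.r).powerset, f.coeff U * ρ ^ #U := by
  simp only [← Finset.prod_const]
  exact f.bernoulliMean_eq_sum_coeff fun _ => ρ

lemma fbarQ_eq_sum_coeff {N : Subgroup G} [N.Normal] [DecidableEq (G ⧸ N)] (f : LocalBundleV S)
    (F : Finset G) (v : G ⧸ N) (η : Conf N) :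
    fbarQ N f F v η = ∑ U ∈ (ballF S f.r).powerset, f.coeff U *
      𝔼 σ ∈ F, occ (U.image fun z : G => (σ : G ⧸ N) * v * z) η := by
  simp only [fbarQ, fQ_eq_viewFrom, f.apply_one_eq_sum_coeff, occ_image, Finset.mul_expect]
  rw [← Finset.expect_sum_comm, Finset.expect_eq_sum_div_card, inv_mul_eq_div]
  rfl

end PolynomialExpansion

lemma etabarQ_eq_density {G : Type} [Group G] {N : Subgroup G} [N.Normal] (F : Finset G)
    (v : G ⧸ N) (η : Conf N) : etabarQ N F v η = density F (fun σ => (σ : G ⧸ N) * v) η := by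
  simp only [etabarQ, density, occ_singleton, Finset.expect_eq_sum_div_card, inv_mul_eq_div]

section BallsAndFolner

lemma submonoidClosure_eq_top_of_inv_mem {G : Type*} [Group G] {S : Set G}
    (hS : ∀ s ∈ S, s⁻¹ ∈ S) (hgen : Subgroup.closure S = ⊤) : Submonoid.closure S = ⊤ := by
  have hinv : S⁻¹ ⊆ S := fun s hs => inv_inv s ▸ hS s⁻¹ hs
  rw [← Set.union_eq_left.2 hinv, ← Subgroup.closure_toSubmonoid, hgen, Subgroup.top_toSubmonoid]

variable {G : Type} [Group G] [DecidableEq G] {S : Finset G} {F : ℕ → Finset G}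

lemma ballF_mono (S : Finset G) : Monotone (ballF S) :=
  monotone_nat_of_le_succ fun _ => Finset.subset_union_left

lemma mem_ballF_wordNorm (hS : Submonoid.closure (S : Set G) = ⊤) (x : G) :
    x ∈ ballF S (wordNorm S x) := by
  have hx : x ∈ Submonoid.closure (S : Set G) := hS ▸ Submonoid.mem_top x
  refine Nat.sInf_mem (s := {n | x ∈ ballF S n}) ?_
  induction hx using Submonoid.closure_induction_right with
  | one => exact ⟨0, one_mem_ballF S 0⟩
  | mul_right x _ s hs ih =>
    obtain ⟨n, hn⟩ := ih
    exact ⟨n + 1, Finset.mem_union_right _ (Finset.mul_mem_mul hn hs)⟩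

lemma mem_ballF_floor (hS : Submonoid.closure (S : Set G) = ⊤) {x : G} {K : ℝ}
    (hx : wordNorm S x ≤ K) : x ∈ ballF S ⌊K⌋₊ :=
  ballF_mono S (Nat.le_floor hx) (mem_ballF_wordNorm hS x)

lemma card_image_mul_sdiff_le (A S : Finset G) (y : G) {s : G} (hs : s ∈ S) :
    #(A.image (· * (y * s)) \ A) ≤ #(A.image (· * y) \ A) + #((A * S) \ A) := by
  have hsub : A.image (· * (y * s)) \ A ⊆ (A.image (· * y) \ A).image (· * s) ∪ (A * S) \ A := by
    intro z hz
    obtain ⟨hz, hzA⟩ := Finset.mem_sdiff.1 hz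
    obtain ⟨a, ha, rfl⟩ := Finset.mem_image.1 hz
    rw [← mul_assoc] at hzA ⊢
    by_cases hay : a * y ∈ A
    · exact Finset.mem_union_right _ (Finset.mem_sdiff.2 ⟨Finset.mul_mem_mul hay hs, hzA⟩)
    · exact Finset.mem_union_left _ (Finset.mem_image_of_mem _
        (Finset.mem_sdiff.2 ⟨Finset.mem_image_of_mem _ ha, hay⟩))
  calc #(A.image (· * (y * s)) \ A)
      ≤ #((A.image (· * y) \ A).image (· * s)) + #((A * S) \ A) :=
        (Finset.card_le_card hsub).trans (Finset.card_union_le _ _)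
    _ ≤ #(A.image (· * y) \ A) + #((A * S) \ A) :=
        Nat.add_le_add_right Finset.card_image_le _

lemma IsFolner.tendsto_card_image_mul_sdiff_div (hF : IsFolner S F)
    (hS : Submonoid.closure (S : Set G) = ⊤) (g : G) :
    Tendsto (fun i => (#((F i).image (· * g) \ F i) : ℝ) / #(F i)) atTop (nhds 0) := by
  have hg : g ∈ Submonoid.closure (S : Set G) := hS ▸ Submonoid.mem_top g
  induction hg using Submonoid.closure_induction_right with
  | one => simp
  | mul_right y _ s hs ih =>
    refine squeeze_zero (fun i => by positivity) (fun i => ?_) (add_zero (0 : ℝ) ▸ ih.add hF.2)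
    rw [← add_div]
    gcongr
    exact_mod_cast card_image_mul_sdiff_le (F i) S y hs

lemma card_mul_card_fiber_le {H : Type*} [Group H] [DecidableEq H] (φ : G →* H) {J : Finset G}
    (hJ : Set.InjOn φ J) (A : Finset G) (v : H) :
    #J * #{τ ∈ A | φ τ = v} ≤ #A + ∑ g ∈ J, #(A.image (· * g) \ A) := by
  set P : Finset G := {τ ∈ A | φ τ = v}
  have hinj : Set.InjOn (fun q : G × G => q.2 * q.1) (J ×ˢ P : Finset (G × G)) := by
    rintro ⟨g, p⟩ hgp ⟨g', p'⟩ hgp' (h : p * g = p' * g')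
    obtain ⟨hg, hp⟩ := Finset.mem_product.1 hgp
    obtain ⟨hg', hp'⟩ := Finset.mem_product.1 hgp'
    have hφ : v * φ g = v * φ g' := by
      have := congrArg φ h
      rwa [map_mul, map_mul, (Finset.mem_filter.1 hp).2, (Finset.mem_filter.1 hp').2] at this
    obtain rfl : g = g' := hJ hg hg' (mul_left_cancel hφ)
    rw [mul_right_cancel h]
  have hsub : (J ×ˢ P).image (fun q => q.2 * q.1) ⊆
      A ∪ J.biUnion fun g => A.image (· * g) \ A := by
    intro z hz
    obtain ⟨⟨g, p⟩, hgp, rfl⟩ := Finset.mem_image.1 hz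
    obtain ⟨hg, hp⟩ := Finset.mem_product.1 hgp
    by_cases hpg : p * g ∈ A
    · exact Finset.mem_union_left _ hpg
    · exact Finset.mem_union_right _ (Finset.mem_biUnion.2 ⟨g, hg, Finset.mem_sdiff.2
        ⟨Finset.mem_image_of_mem _ (Finset.mem_filter.1 hp).1, hpg⟩⟩)
  calc #J * #P = #((J ×ˢ P).image fun q => q.2 * q.1) := by
        rw [Finset.card_image_of_injOn hinj, Finset.card_product]
    _ ≤ #A + #(J.biUnion fun g => A.image (· * g) \ A) :=
        (Finset.card_le_card hsub).trans (Finset.card_union_le _ _)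
    _ ≤ #A + ∑ g ∈ J, #(A.image (· * g) \ A) := by
        gcongr
        exact Finset.card_biUnion_le

lemma IsFolner.exists_eventually_card_fiber_le [Infinite G] (hF : IsFolner S F)
    (hS : Submonoid.closure (S : Set G) = ⊤) {β : ℝ} (hβ : 0 < β) :
    ∃ J : Finset G, ∀ᶠ i in atTop, ∀ {H : Type*} [Group H] [DecidableEq H] (φ : G →* H),
      Set.InjOn φ J → ∀ v, #{τ ∈ F i | φ τ = v} ≤ β * #(F i) := by
  obtain ⟨R, hR⟩ := exists_nat_gt (2 / β)
  obtain ⟨J, hJ⟩ := Infinite.exists_subset_card_eq G R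
  refine ⟨J, ?_⟩
  have hboundary : Tendsto (fun i => ∑ g ∈ J, (#((F i).image (· * g) \ F i) : ℝ) / #(F i))
      atTop (nhds 0) := by
    simpa using tendsto_finsetSum J fun g _ => hF.tendsto_card_image_mul_sdiff_div hS g
  filter_upwards [hboundary.eventually_lt_const one_pos] with i hi H _ _ φ hφ v
  have hF0 : (0 : ℝ) < #(F i) := by exact_mod_cast (hF.1 i).card_pos
  have hR0 : (0 : ℝ) < R := (by positivity : 0 < 2 / β).trans hR
  rw [← Finset.sum_div, div_lt_one hF0] at hi
  rw [div_lt_iff₀ hβ] at hR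
  refine le_of_mul_le_mul_left ?_ hR0
  calc (R : ℝ) * #{τ ∈ F i | φ τ = v}
      ≤ #(F i) + ∑ g ∈ J, (#((F i).image (· * g) \ F i) : ℝ) := by
        rw [← hJ]
        exact_mod_cast card_mul_card_fiber_le φ hφ (F i) v
    _ ≤ 2 * #(F i) := by linarith
    _ ≤ R * (β * #(F i)) := by rw [← mul_assoc]; gcongr

lemma IsFolner.tendsto_card [Infinite G] (hF : IsFolner S F)
    (hS : Submonoid.closure (S : Set G) = ⊤) :
    Tendsto (fun i => (#(F i) : ℝ)) atTop atTop := by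
  refine tendsto_atTop.2 fun b => ?_
  have hb : 0 < |b| + 1 := by positivity
  obtain ⟨J, hJ⟩ := hF.exists_eventually_card_fiber_le hS (inv_pos.2 hb)
  filter_upwards [hJ] with i hi
  obtain ⟨x, hx⟩ := hF.1 i
  have hfiber : (1 : ℝ) ≤ #{τ ∈ F i | MonoidHom.id G τ = x} := by
    rw [Nat.one_le_cast, Finset.one_le_card]
    exact ⟨x, Finset.mem_filter.2 ⟨hx, rfl⟩⟩
  have := hfiber.trans (hi (MonoidHom.id G) Function.injective_id.injOn x)
  rw [le_inv_mul_iff₀ hb] at this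
  linarith [le_abs_self b]

lemma eventually_wordNorm_le (S A : Finset G) :
    ∀ᶠ K : ℝ in atTop, ∀ x ∈ A, wordNorm S x ≤ K :=
  (eventually_all_finset A).2 fun _ _ => eventually_ge_atTop _

lemma IsFolner.bddAbove_wordNorm_le [Infinite G] (hF : IsFolner S F)
    (hS : Submonoid.closure (S : Set G) = ⊤) (K : ℝ) :
    BddAbove {i | ∀ x ∈ F i, wordNorm S x ≤ K} := by
  obtain ⟨i₀, hi₀⟩ := eventually_atTop.1
    ((hF.tendsto_card hS).eventually_gt_atTop (#(ballF S ⌊K⌋₊) : ℝ))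
  refine ⟨i₀, fun i hi => le_of_not_ge fun hle => (hi₀ i hle).not_ge ?_⟩
  exact_mod_cast Finset.card_le_card fun x hx => mem_ballF_floor hS (hi x hx)

lemma IsFolner.tendsto_bFol [Infinite G] (hF : IsFolner S F)
    (hS : Submonoid.closure (S : Set G) = ⊤) : Tendsto (bFol S F) atTop atTop := by
  refine tendsto_atTop.2 fun i => ?_
  filter_upwards [eventually_wordNorm_le S (F i)] with K hK
  exact le_csSup (hF.bddAbove_wordNorm_le hS K) hK

lemma IsFolner.eventually_wordNorm_le_of_mem_bFol [Infinite G] (hF : IsFolner S F)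
    (hS : Submonoid.closure (S : Set G) = ⊤) :
    ∀ᶠ K in atTop, ∀ x ∈ F (bFol S F K), wordNorm S x ≤ K := by
  filter_upwards [eventually_wordNorm_le S (F 0)] with K hK
  exact Nat.sSup_mem (s := {i | ∀ x ∈ F i, (wordNorm S x : ℝ) ≤ K}) ⟨0, hK⟩
    (hF.bddAbove_wordNorm_le hS K)

end BallsAndFolner

section Quotients

variable {G : Type} [Group G] {Γs : ℕ → Subgroup G}

lemma eventually_notMem_of_antitone (hdesc : Antitone Γs) (hsep : ∀ x, (∀ m, x ∈ Γs m) → x = 1)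
    {x : G} (hx : x ≠ 1) : ∀ᶠ m in atTop, x ∉ Γs m := by
  obtain ⟨m₀, hm₀⟩ := not_forall.1 (mt (hsep x) hx)
  filter_upwards [eventually_ge_atTop m₀] with m hm hxm
  exact hm₀ (hdesc hm hxm)

lemma eventually_injOn_mk (hsep : ∀ x ≠ 1, ∀ᶠ m in atTop, x ∉ Γs m) (A : Finset G) :
    ∀ᶠ m in atTop, Set.InjOn ((↑) : G → G ⧸ Γs m) A := by
  have hpair (x y : G) : ∀ᶠ m in atTop, (x : G ⧸ Γs m) = y → x = y := by
    by_cases hxy : x = y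
    · exact Eventually.of_forall fun _ _ => hxy
    · filter_upwards [hsep (x⁻¹ * y) (mt inv_mul_eq_one.1 hxy)] with m hm h
      exact absurd (QuotientGroup.eq.1 h) hm
  exact (eventually_all_finset A).2 fun x _ => (eventually_all_finset A).2 fun y _ => hpair x y

lemma card_not_disjoint_image_mul_le {H : Type*} [Group H] [DecidableEq H]
    (φ : G →* H) {A U : Finset G} (hφ : Set.InjOn φ (A * U)) :
    #{q ∈ A ×ˢ A | ¬Disjoint (U.image fun z => φ q.1 * φ z) (U.image fun z => φ q.2 * φ z)} ≤
      #A * (#U * #U) := by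
  classical
  have hsub : {q ∈ A ×ˢ A |
      ¬Disjoint (U.image fun z => φ q.1 * φ z) (U.image fun z => φ q.2 * φ z)} ⊆
        (A ×ˢ (U ×ˢ U)).image fun q => (q.1, q.1 * q.2.1 * q.2.2⁻¹) := by
    rintro ⟨σ, τ⟩ hq
    obtain ⟨hστ, hmeet⟩ := Finset.mem_filter.1 hq
    obtain ⟨hσ, hτ⟩ := Finset.mem_product.1 hστ
    obtain ⟨_, hv, hv'⟩ := Finset.not_disjoint_iff.1 hmeet
    obtain ⟨u, hu, rfl⟩ := Finset.mem_image.1 hv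
    obtain ⟨w, hw, hwu⟩ := Finset.mem_image.1 hv'
    have heq : τ * w = σ * u := hφ (Set.mul_mem_mul hτ hw) (Set.mul_mem_mul hσ hu)
      (by rw [map_mul, map_mul, hwu])
    exact Finset.mem_image.2 ⟨(σ, u, w), by simp [hσ, hu, hw],
      Prod.ext rfl (mul_inv_eq_of_eq_mul heq.symm)⟩
  calc _ ≤ #(A ×ˢ (U ×ˢ U)) := (Finset.card_le_card hsub).trans Finset.card_image_le
    _ = #A * (#U * #U) := by simp only [Finset.card_product]

end Quotients

section LocalErgodicBound

variable {G : Type} [Group G] [DecidableEq G] {S : Finset G}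

/-- The bound on `E_μ |f̄_{o,i} - ⟨f_o⟩(η̄_{o,b})|` when `μ` is exchangeable up to an error `D`, no
site receives more than a fraction `β` of the large block, and the small block has `n` elements. -/
noncomputable def errorBound (f : LocalBundleV S) (D β n : ℝ) : ℝ :=
  ∑ U ∈ (ballF S f.r).powerset,
    |f.coeff U| * √(8 * #U * D + 8 * (#U : ℝ) ^ 2 * β + (#U : ℝ) ^ 2 / n)

lemma errorBound_nonneg (f : LocalBundleV S) (D β n : ℝ) : 0 ≤ errorBound f D β n :=
  Finset.sum_nonneg fun _ _ => mul_nonneg (abs_nonneg _) (Real.sqrt_nonneg _)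

lemma tendsto_errorBound_zero (f : LocalBundleV S) (a n : ℝ) :
    Tendsto (fun ε => errorBound f (a * ε) ε n) (nhds 0) (nhds (errorBound f 0 0 n)) := by
  have hcont : Continuous fun ε => errorBound f (a * ε) ε n := by
    unfold errorBound
    fun_prop
  simpa only [mul_zero] using hcont.tendsto 0

lemma tendsto_errorBound_atTop (f : LocalBundleV S) :
    Tendsto (errorBound f 0 0) atTop (nhds 0) := by
  have hterm (U : Finset G) :
      Tendsto (fun n : ℝ => |f.coeff U| * √((#U : ℝ) ^ 2 / n)) atTop (nhds 0) := by
    simpa only [id, Real.sqrt_zero, mul_zero] using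
      ((tendsto_id.const_div_atTop ((#U : ℝ) ^ 2)).sqrt).const_mul |f.coeff U|
  unfold errorBound
  simpa only [mul_zero, zero_add, Finset.sum_const_zero] using
    tendsto_finsetSum (ballF S f.r).powerset fun U _ => hterm U

lemma IsApproxExchangeable.Emeas_abs_fbarQ_sub_globalAvg_le {N : Subgroup G} [N.Normal]
    [Fintype (G ⧸ N)] [DecidableEq (G ⧸ N)] {μ : Conf N → ℝ} {W : Set (G ⧸ N)} {D β : ℝ}
    (hD : IsApproxExchangeable μ W D) (hD0 : 0 ≤ D) (hμ : IsProb N μ) (f : LocalBundleV S)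
    {A T : Finset G} (hA : A.Nonempty) (hAW : ∀ x ∈ A * ballF S f.r, (x : G ⧸ N) ∈ W)
    (hinj : Set.InjOn ((↑) : G → G ⧸ N) (A * ballF S f.r : Finset G))
    (hT : T.Nonempty) (hTW : ∀ τ ∈ T, (τ : G ⧸ N) ∈ W) (hβ0 : 0 ≤ β)
    (hβ : ∀ v : G ⧸ N, #{τ ∈ T | QuotientGroup.mk' N τ = v} ≤ β * #T) :
    Emeas N μ (fun η => |fbarQ N f A 1 η - globalAvg f (etabarQ N T 1 η)|) ≤
      errorBound f D β #A := by
  simp only [fbarQ_eq_sum_coeff, globalAvg_eq_sum_coeff, etabarQ_eq_density, mul_one]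
  refine (mean_abs_sum_mul_sub_le hμ _ _ _ _).trans (Finset.sum_le_sum fun U hU =>
    mul_le_mul_of_nonneg_left ?_ (abs_nonneg _))
  have hU : U ⊆ ballF S f.r := Finset.mem_powerset.1 hU
  have hsite {σ u : G} (hσ : σ ∈ A) (hu : u ∈ U) : σ * u ∈ A * ballF S f.r :=
    Finset.mul_mem_mul hσ (hU hu)
  refine hD.mean_abs_expect_occ_sub_density_pow_le hD0 hμ hT hTW hβ0 hβ hA
    (fun σ hσ => ?_) (fun σ hσ => Finset.card_image_of_injOn fun u hu w hw huw => ?_) ?_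
  · rw [Finset.coe_image, Set.image_subset_iff]
    exact fun u hu => hAW (σ * u) (hsite hσ hu)
  · exact mul_left_cancel (hinj (hsite hσ hu) (hsite hσ hw) huw)
  · have hA0 : (#A : ℝ) ≠ 0 := Nat.cast_ne_zero.2 hA.card_ne_zero
    have hinjU : Set.InjOn (QuotientGroup.mk' N) (A * U) :=
      hinj.mono (by rw [Finset.coe_mul]; exact Set.mul_subset_mul_left (Finset.coe_subset.2 hU))
    refine (Nat.cast_le.2 (card_not_disjoint_image_mul_le _ hinjU)).trans_eq ?_
    rw [Finset.card_product]
    push_cast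
    field_simp

lemma isApproxExchangeable_of_ImGen_le {N : Subgroup G} [N.Normal] [Fintype (G ⧸ N)]
    [DecidableEq (G ⧸ N)] {μ : Conf N → ℝ} {c : JumpRate S}
    (hN : Set.InjOn ((↑) : G → G ⧸ N) (rateWindow c)) (hμ : IsProb N μ)
    (hinv : IsInvariant N μ) {C t : ℝ} (hC : 0 ≤ C) (ht : 0 < t)
    (hI : ImGen N c μ ≤ C * N.index / t) {ε : ℝ} (hε : 0 ≤ ε) :
    IsApproxExchangeable μ (((↑) : G → G ⧸ N) '' ballF S ⌊ε * √t⌋₊)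
      (12 * √(2 * C / c.c₀) * ε) := by
  have hsqrt : √t ≠ 0 := (Real.sqrt_pos.2 ht).ne'
  intro x hx y hy
  calc l1Defect μ (exchPerm x y)
      ≤ 3 * (2 * ⌊ε * √t⌋₊ * (2 * √(2 * C / c.c₀) / √t)) :=
        isApproxExchangeable_image_ballF (l1Defect_exchPerm_edge_le hN hμ hinv hC ht hI)
          (by positivity) _ x hx y hy
    _ ≤ 3 * (2 * (ε * √t) * (2 * √(2 * C / c.c₀) / √t)) := by
        gcongr
        exact Nat.floor_le (by positivity)
    _ = 12 * √(2 * C / c.c₀) * ε := by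
        field_simp [hsqrt]
        ring

lemma IsFolner.eventually_Emeas_abs_fbarQ_sub_globalAvg_le [Infinite G] {F : ℕ → Finset G}
    (hF : IsFolner S F) (hS : Submonoid.closure (S : Set G) = ⊤) {Γs : ℕ → Subgroup G}
    [∀ m, (Γs m).Normal] [∀ m, Fintype (G ⧸ Γs m)] [∀ m, DecidableEq (G ⧸ Γs m)]
    (hsep : ∀ x ≠ 1, ∀ᶠ m in atTop, x ∉ Γs m) {t : ℕ → ℝ} (ht : Tendsto t atTop atTop)
    (c : JumpRate S) (f : LocalBundleV S) {C : ℝ} (hC : 0 ≤ C) (i : ℕ) {ε : ℝ} (hε : 0 < ε) :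
    ∀ᶠ m in atTop, ∀ μ, IsProb (Γs m) μ → IsInvariant (Γs m) μ →
      ImGen (Γs m) c μ ≤ C * (Γs m).index / t m →
        Emeas (Γs m) μ (fun η => |fbarQ (Γs m) f (F i) 1 η -
          globalAvg f (etabarQ (Γs m) (F (bFol S F (ε * √(t m)))) 1 η)|) ≤
            errorBound f (12 * √(2 * C / c.c₀) * ε) ε #(F i) := by
  have hradius : Tendsto (fun m => ε * √(t m)) atTop atTop :=
    (Real.tendsto_sqrt_atTop.comp ht).const_mul_atTop hε
  obtain ⟨J, hJ⟩ := hF.exists_eventually_card_fiber_le hS hε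
  filter_upwards [ht.eventually_gt_atTop 0,
    hradius.eventually (hF.eventually_wordNorm_le_of_mem_bFol hS),
    ((hF.tendsto_bFol hS).comp hradius).eventually hJ,
    hradius.eventually (eventually_wordNorm_le S (F i * ballF S f.r)),
    eventually_injOn_mk hsep J, eventually_injOn_mk hsep (rateWindow c),
    eventually_injOn_mk hsep (F i * ballF S f.r)]
    with m ht0 hblock hfiber hsmall hinjJ hinjc hinjf μ hμ hinv hI
  exact (isApproxExchangeable_of_ImGen_le hinjc hμ hinv hC ht0 hI
    hε.le).Emeas_abs_fbarQ_sub_globalAvg_le (by positivity) hμ f (hF.1 i)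
      (fun x hx => Set.mem_image_of_mem _ (mem_ballF_floor hS (hsmall x hx))) hinjf (hF.1 _)
      (fun τ hτ => Set.mem_image_of_mem _ (mem_ballF_floor hS (hblock τ hτ))) hε.le
      (hfiber (QuotientGroup.mk' (Γs m)) hinjJ)

end LocalErgodicBound

lemma limsup_mem_Icc_of_le_tendsto {α : Type*} {l : Filter α} [l.NeBot] {u h : α → ℝ} {b : ℝ}
    (hu0 : ∀ᶠ x in l, 0 ≤ u x) (hu : u ≤ᶠ[l] h) (hh : Tendsto h l (nhds b)) :
    limsup u l ∈ Set.Icc 0 b := by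
  have hle : IsBoundedUnder (· ≤ ·) l u := hh.isBoundedUnder_le.mono_le hu
  have hge : IsBoundedUnder (· ≥ ·) l u := isBoundedUnder_of_eventually_ge hu0
  refine ⟨le_limsup_of_frequently_le hu0.frequently hle, ?_⟩
  rw [← hh.limsup_eq]
  exact limsup_le_limsup hu hge.isCoboundedUnder_le hh.isBoundedUnder_le

lemma tendsto_limsup_limsup_zero {α β γ : Type*} {l : Filter α} {l' : Filter β} {l'' : Filter γ}
    [l'.NeBot] [l''.NeBot] {u : α → β → γ → ℝ} {h : α → β → ℝ} {b : α → ℝ}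
    (hu0 : ∀ i x y, 0 ≤ u i x y) (hu : ∀ i, ∀ᶠ x in l', ∀ᶠ y in l'', u i x y ≤ h i x)
    (hh : ∀ i, Tendsto (h i) l' (nhds (b i))) (hb : Tendsto b l (nhds 0)) :
    Tendsto (fun i => limsup (fun x => limsup (u i x) l'') l') l (nhds 0) := by
  have hinner (i : α) : ∀ᶠ x in l', limsup (u i x) l'' ∈ Set.Icc 0 (h i x) :=
    (hu i).mono fun x hx =>
      limsup_mem_Icc_of_le_tendsto (Eventually.of_forall (hu0 i x)) hx tendsto_const_nhds
  have houter (i : α) : limsup (fun x => limsup (u i x) l'') l' ∈ Set.Icc 0 (b i) :=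
    limsup_mem_Icc_of_le_tendsto ((hinner i).mono fun _ hx => hx.1)
      ((hinner i).mono fun _ hx => hx.2) (hh i)
  exact squeeze_zero (fun i => (houter i).1) (fun i => (houter i).2) hb

theorem local_ergodic_equilibrium_general {G : Type} [Group G] [DecidableEq G] [Infinite G]
    (S : Finset G) (hS : Submonoid.closure (S : Set G) = ⊤)
    (Γs : ℕ → Subgroup G) [∀ m, (Γs m).Normal] [∀ m, Fintype (G ⧸ Γs m)]
    [∀ m, DecidableEq (G ⧸ Γs m)] (hsep : ∀ x ≠ 1, ∀ᶠ m in atTop, x ∉ Γs m)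
    (t : ℕ → ℝ) (ht : Tendsto t atTop atTop) (F : ℕ → Finset G) (hF : IsFolner S F)
    (c : JumpRate S) (f : LocalBundleV S) (C : ℝ) (hC : 0 ≤ C) :
    Tendsto (fun i : ℕ =>
        limsup (fun ε : ℝ =>
            limsup (fun m : ℕ =>
                sSup {x : ℝ | ∃ μ : Conf (Γs m) → ℝ,
                  IsProb (Γs m) μ ∧ IsInvariant (Γs m) μ ∧
                    ImGen (Γs m) c μ ≤ C * ((Γs m).index : ℝ) / t m ∧
                    x = Emeas (Γs m) μ (fun η =>
                      |fbarQ (Γs m) f (F i) 1 η -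
                        globalAvg f
                          (etabarQ (Γs m) (F (bFol S F (ε * Real.sqrt (t m)))) 1 η)|)})
              atTop)
          (nhdsWithin 0 (Set.Ioi 0)))
      atTop (nhds 0) := by
  refine tendsto_limsup_limsup_zero (fun i ε m => ?_) (fun i => ?_)
    (fun i => (tendsto_errorBound_zero f (12 * √(2 * C / c.c₀)) #(F i)).mono_left
      nhdsWithin_le_nhds)
    ((tendsto_errorBound_atTop f).comp (hF.tendsto_card hS))
  · refine Real.sSup_nonneg ?_
    rintro _ ⟨μ, hμ, -, -, rfl⟩
    exact Finset.sum_nonneg fun η _ => mul_nonneg (hμ.1 η) (abs_nonneg _)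
  · filter_upwards [self_mem_nhdsWithin] with ε hε
    filter_upwards [hF.eventually_Emeas_abs_fbarQ_sub_globalAvg_le hS hsep ht c f hC i hε]
      with m hm
    refine Real.sSup_le ?_ (errorBound_nonneg f _ _ _)
    rintro _ ⟨μ, hμ, hinv, hI, rfl⟩
    exact hm μ hμ hinv hI
/-- **Theorem 3.1 (local ergodic theorem in equilibrium form).**
For every jump rate `c`, every `Γ`-invariant local function bundle `f` and every `C > 0`,
`lim_{i→∞} limsup_{ε→0} limsup_{m→∞} sup_{μ ∈ P_{m,C}}
  E_μ |f̄_{o,i} - ⟨f_o⟩(η̄_{o,b(ε√t_m)})| = 0`. -/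
theorem local_ergodic_equilibrium
    {Γ : Type} [Group Γ] [DecidableEq Γ] [Infinite Γ]
    (S : Finset Γ) (hS_symm : ∀ s ∈ S, s⁻¹ ∈ S)
    (hS_gen : Subgroup.closure (S : Set Γ) = ⊤)
    (Γs : ℕ → Subgroup Γ) [∀ m, (Γs m).Normal] [∀ m, (Γs m).FiniteIndex]
    [∀ m, Fintype (Γ ⧸ Γs m)] [∀ m, DecidableEq (Γ ⧸ Γs m)]
    (hdesc : ∀ m, Γs (m + 1) ≤ Γs m)
    (hsep : ∀ x : Γ, (∀ m, x ∈ Γs m) → x = 1)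
    (t : ℕ → ℝ) (ht_pos : ∀ m, 0 < t m) (ht_mono : StrictMono t)
    (ht_top : Tendsto t atTop atTop)
    (ht_diam : ∀ m, Real.sqrt (t m) ≤ 2 * (diamQ (Γs m) S : ℝ))
    (F : ℕ → Finset Γ) (hF : IsFolner S F)
    (c : JumpRate S) (f : LocalBundleV S) (C : ℝ) (hC : 0 < C) :
    Tendsto (fun i : ℕ =>
        limsup (fun ε : ℝ =>
            limsup (fun m : ℕ =>
                sSup {x : ℝ | ∃ μ : Conf (Γs m) → ℝ,
                  IsProb (Γs m) μ ∧ IsInvariant (Γs m) μ ∧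
                    ImGen (Γs m) c μ ≤ C * ((Γs m).index : ℝ) / t m ∧
                    x = Emeas (Γs m) μ (fun η =>
                      |fbarQ (Γs m) f (F i) 1 η -
                        globalAvg f
                          (etabarQ (Γs m) (F (bFol S F (ε * Real.sqrt (t m)))) 1 η)|)})
              atTop)
          (nhdsWithin 0 (Set.Ioi 0)))
      atTop (nhds 0) := by
  exact local_ergodic_equilibrium_general S (submonoidClosure_eq_top_of_inv_mem hS_symm hS_gen) Γs
    (fun _ => eventually_notMem_of_antitone (antitone_nat_of_succ_le hdesc) hsep) t ht_top F hF c f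
    C hC.le

end Tower
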